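/- arXiv:2411.02573 — 10 statements merged into one kernel-verified Lean document; each statement's English description precedes it below -/
import Mathlib

section
/- Maximal monotonicity of the circuit operator (key step in the proof of Theorem B.1). Let f: ℝ^m → ℝ be μ-strongly convex and M-smooth (0 < μ ≤ M < ∞), and let B be a real matrix with σ + m columns, the indices {1,…,σ} partitioned into sets ℛ, ℒ, 𝒞. Define the set-valued operator 𝔸: ℝ^{|𝒞|+|ℒ|} ⇉ ℝ^{|𝒞|+|ℒ|} whose graph is { ((v_𝒞, i_ℒ), (−i_𝒞, −v_ℒ)) : there exist v_ℛ, i_ℛ ∈ ℝ^{|ℛ|}, v_ℒ ∈ ℝ^{|ℒ|}, i_𝒞 ∈ ℝ^{|𝒞|}, x, y ∈ ℝ^m such that, with v = (v_ℛ, v_ℒ, v_𝒞) and i = (i_ℛ, i_ℒ, i_𝒞), one has (i; y) ∈ ker B, (v; x) ∈ range Bᵀ, y = ∇f(x), and v_ℛ = i_ℛ }. Then 𝔸 is maximal monotone. -/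
open Matrix

/-- The continuous linear map `h ↦ ⟨g, h⟩` on `ℝ^m` (Euclidean inner product). -/
noncomputable def dotCLM {m : ℕ} (g : Fin m → ℝ) : (Fin m → ℝ) →L[ℝ] ℝ :=
  ∑ k, g k • ContinuousLinearMap.proj k

/-- `g` is the (Euclidean) gradient of `f` everywhere. -/
def HasGradient {m : ℕ} (f : (Fin m → ℝ) → ℝ) (g : (Fin m → ℝ) → Fin m → ℝ) : Prop :=
  ∀ x, HasFDerivAt f (dotCLM (g x)) x

/-- `f` is `μ`-strongly convex: `f − (μ/2)‖·‖²` is convex. -/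
def StronglyConvexFun {m : ℕ} (μ : ℝ) (f : (Fin m → ℝ) → ℝ) : Prop :=
  ConvexOn ℝ Set.univ (fun x => f x - μ / 2 * (x ⬝ᵥ x))

/-- The gradient `g` is `M`-Lipschitz (squared Euclidean form). -/
def GradLipschitz {m : ℕ} (M : ℝ) (g : (Fin m → ℝ) → Fin m → ℝ) : Prop :=
  ∀ x z : Fin m → ℝ, (g x - g z) ⬝ᵥ (g x - g z) ≤ M ^ 2 * ((x - z) ⬝ᵥ (x - z))

/-- A graph `G ⊆ ℝ^ι × ℝ^ι` is monotone. -/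
def MonoGraph {ι : Type*} [Fintype ι] (G : Set ((ι → ℝ) × (ι → ℝ))) : Prop :=
  ∀ q₁ ∈ G, ∀ q₂ ∈ G,
    0 ≤ ∑ l, (q₁.2 l - q₂.2 l) * (q₁.1 l - q₂.1 l)

/-- A graph is maximal monotone: monotone and not properly contained in the
graph of any monotone operator. -/
def MaximalMonoGraph {ι : Type*} [Fintype ι] (G : Set ((ι → ℝ) × (ι → ℝ))) : Prop :=
  MonoGraph G ∧ ∀ G' : Set ((ι → ℝ) × (ι → ℝ)), MonoGraph G' → G ⊆ G' → G' = G

lemma dotCLM_apply {m : ℕ} (g h : Fin m → ℝ) : dotCLM g h = g ⬝ᵥ h := by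
  simp [dotCLM, dotProduct]

lemma hasDerivAt_line {m : ℕ} {f : (Fin m → ℝ) → ℝ} {g : (Fin m → ℝ) → Fin m → ℝ}
    (hgrad : HasGradient f g) (x d : Fin m → ℝ) :
    HasDerivAt (fun t : ℝ => f (x + t • d)) (g x ⬝ᵥ d) 0 := by
  have h1 : HasDerivAt (fun t : ℝ => x + t • d) d 0 := by
    simpa using ((hasDerivAt_id (0 : ℝ)).smul_const d).const_add x
  have h2 : HasFDerivAt f (dotCLM (g x)) (x + (0 : ℝ) • d) := by simpa using hgrad x
  have := h2.comp_hasDerivAt (0 : ℝ) h1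
  rwa [dotCLM_apply] at this

lemma first_order {m : ℕ} {μ : ℝ} {f : (Fin m → ℝ) → ℝ} {g : (Fin m → ℝ) → Fin m → ℝ}
    (hgrad : HasGradient f g) (hsc : StronglyConvexFun μ f) (x d : Fin m → ℝ) :
    f x + g x ⬝ᵥ d + μ / 2 * (d ⬝ᵥ d) ≤ f (x + d) := by
  set φ : ℝ → ℝ := fun t => f (x + t • d) - μ / 2 * ((x + t • d) ⬝ᵥ (x + t • d)) with hφ
  have hconv : ConvexOn ℝ Set.univ φ := by
    refine ⟨convex_univ, ?_⟩
    intro s _ t _ a b ha hb hab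
    have := hsc.2 (Set.mem_univ (x + s • d)) (Set.mem_univ (x + t • d)) ha hb hab
    have e : a • (x + s • d) + b • (x + t • d) = x + (a • s + b • t) • d := by
      ext j
      simp only [Pi.add_apply, Pi.smul_apply, smul_eq_mul]
      linear_combination (x j) * hab
    rw [e] at this
    exact this
  have hq : ∀ t : ℝ, (x + t • d) ⬝ᵥ (x + t • d) =
      x ⬝ᵥ x + t * (2 * (x ⬝ᵥ d)) + t ^ 2 * (d ⬝ᵥ d) := by
    intro t
    simp only [add_dotProduct, dotProduct_add, smul_dotProduct, dotProduct_smul, smul_eq_mul,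
      dotProduct_comm d x]
    ring
  have hd : HasDerivAt φ (g x ⬝ᵥ d - μ / 2 * (2 * (x ⬝ᵥ d))) 0 := by
    refine (hasDerivAt_line hgrad x d).sub (HasDerivAt.const_mul _ ?_)
    have : (fun t : ℝ => (x + t • d) ⬝ᵥ (x + t • d)) =
      fun t => x ⬝ᵥ x + t * (2 * (x ⬝ᵥ d)) + t ^ 2 * (d ⬝ᵥ d) := funext hq
    rw [this]
    have h := (((hasDerivAt_id (0:ℝ)).mul_const (2 * (x ⬝ᵥ d))).const_add (x ⬝ᵥ x)).add
      (((hasDerivAt_id (0:ℝ)).pow 2).mul_const (d ⬝ᵥ d))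
    refine HasDerivAt.congr_deriv h ?_
    simp
  have key := hconv.le_slope_of_hasDerivAt (Set.mem_univ 0) (Set.mem_univ 1) one_pos hd
  have h0 : φ 0 = f x - μ / 2 * (x ⬝ᵥ x) := by simp [hφ]
  have h1 : φ 1 = f (x + d) - μ / 2 * (x ⬝ᵥ x + (2 * (x ⬝ᵥ d)) + (d ⬝ᵥ d)) := by
    have := hq 1
    change f (x + (1:ℝ) • d) - μ / 2 * ((x + (1:ℝ) • d) ⬝ᵥ (x + (1:ℝ) • d)) = _
    rw [this]; simp
  rw [slope_def_field, h0, h1] at key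
  linarith

lemma grad_mono {m : ℕ} {μ : ℝ} (hμ : 0 < μ) {f : (Fin m → ℝ) → ℝ}
    {g : (Fin m → ℝ) → Fin m → ℝ}
    (hgrad : HasGradient f g) (hsc : StronglyConvexFun μ f) (x z : Fin m → ℝ) :
    0 ≤ (g x - g z) ⬝ᵥ (x - z) := by
  have h1 := first_order hgrad hsc x (z - x)
  have h2 := first_order hgrad hsc z (x - z)
  have p : ∀ d : Fin m → ℝ, 0 ≤ μ / 2 * (d ⬝ᵥ d) := fun d =>
    mul_nonneg (by positivity) (Finset.sum_nonneg fun j _ => mul_self_nonneg _)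
  have p1 := p (z - x)
  have p2 := p (x - z)
  rw [add_sub_cancel] at h1 h2
  have e : (g x - g z) ⬝ᵥ (x - z) = -(g x ⬝ᵥ (z - x)) - g z ⬝ᵥ (x - z) := by
    rw [← neg_sub x z, dotProduct_neg, sub_dotProduct]; ring
  rw [e]; linarith

/-- Solvability of the resolvent equation. -/
lemma circuit_resolvent {m σ k : ℕ} {μ : ℝ} (hμ : 0 < μ)
    {f : (Fin m → ℝ) → ℝ} {g : (Fin m → ℝ) → Fin m → ℝ}
    (hgrad : HasGradient f g) (hsc : StronglyConvexFun μ f)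
    (B : Matrix (Fin k) (Fin σ ⊕ Fin m) ℝ) (c : Fin σ → ℝ) :
    ∃ (v : Fin σ → ℝ) (x : Fin m → ℝ),
      (∃ z : Fin k → ℝ, Sum.elim v x = B.transpose.mulVec z) ∧
      B.mulVec (Sum.elim (v + c) (g x)) = 0 := by
  let φ : (Fin σ ⊕ Fin m → ℝ) → ℝ := fun u =>
    1 / 2 * ∑ j, (u (Sum.inl j) + c j) ^ 2 + f (fun l => u (Sum.inr l))
  have hfc : Continuous f := continuous_iff_continuousAt.2 fun x => (hgrad x).continuousAt
  have hφc : Continuous φ := by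
    refine Continuous.add (by fun_prop) (hfc.comp (by fun_prop))
  let S : Submodule ℝ (Fin σ ⊕ Fin m → ℝ) := LinearMap.range B.transpose.mulVecLin
  have hS : IsClosed (S : Set (Fin σ ⊕ Fin m → ℝ)) := S.closed_of_finiteDimensional
  -- coercivity
  have hco : ∃ α > 0, ∃ β : ℝ, ∀ u, α * ∑ j, u j ^ 2 - β ≤ φ u := by
    refine ⟨min (1/4) (μ/4), by positivity,
      1 / 2 * ∑ j, c j ^ 2 + ∑ l, g 0 l ^ 2 / μ - f 0, fun u => ?_⟩
    have h := first_order hgrad hsc 0 (fun l => u (Sum.inr l))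
    rw [zero_add] at h
    have h1 : ∑ j, (min (1/4) (μ/4) * u (Sum.inl j) ^ 2 - 1 / 2 * c j ^ 2) ≤
        ∑ j, 1 / 2 * (u (Sum.inl j) + c j) ^ 2 := by
      refine Finset.sum_le_sum fun j _ => ?_
      have : min (1/4) (μ/4) * u (Sum.inl j) ^ 2 ≤ 1/4 * u (Sum.inl j) ^ 2 := by
        gcongr; exact min_le_left _ _
      nlinarith [sq_nonneg (u (Sum.inl j) + 2 * c j)]
    have h2 : ∑ l, (min (1/4) (μ/4) * u (Sum.inr l) ^ 2 - g 0 l ^ 2 / μ) ≤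
        ∑ l, (g 0 l * u (Sum.inr l) + μ / 2 * (u (Sum.inr l) * u (Sum.inr l))) := by
      refine Finset.sum_le_sum fun l _ => ?_
      have h3 : min (1/4) (μ/4) * u (Sum.inr l) ^ 2 ≤ μ/4 * u (Sum.inr l) ^ 2 := by
        gcongr; exact min_le_right _ _
      have h4 : g 0 l * u (Sum.inr l) + μ / 2 * (u (Sum.inr l) * u (Sum.inr l))
          - μ/4 * u (Sum.inr l) ^ 2 + g 0 l ^ 2 / μ
          = (μ / 2 * u (Sum.inr l) + g 0 l) ^ 2 / μ := by
        field_simp; ring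
      have h5 : 0 ≤ (μ / 2 * u (Sum.inr l) + g 0 l) ^ 2 / μ := by positivity
      linarith
    simp only [Finset.sum_sub_distrib, Finset.sum_add_distrib, ← Finset.mul_sum] at h1 h2
    simp only [dotProduct] at h
    simp only [φ, Fintype.sum_sum_type]
    linarith
  obtain ⟨α, hα, β, hco⟩ := hco
  have hmin : ∃ u ∈ S, ∀ w ∈ S, φ u ≤ φ w := by
    let K : Set (Fin σ ⊕ Fin m → ℝ) := (S : Set _) ∩ {u | φ u ≤ φ 0}
    have hK : IsCompact K := by
      refine Metric.isCompact_of_isClosed_isBounded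
        (hS.inter (isClosed_le hφc continuous_const)) ?_
      refine (Metric.isBounded_iff_subset_closedBall 0).2 ⟨√((φ 0 + β) / α), ?_⟩
      rintro u ⟨_, hu⟩
      rw [mem_closedBall_zero_iff, pi_norm_le_iff_of_nonneg (Real.sqrt_nonneg _)]
      intro j
      rw [Real.norm_eq_abs]
      apply Real.abs_le_sqrt
      rw [le_div_iff₀ hα]
      have h1 : u j ^ 2 ≤ ∑ j, u j ^ 2 :=
        Finset.single_le_sum (f := fun j => u j ^ 2) (fun j _ => sq_nonneg _) (Finset.mem_univ j)
      have h2 := hco u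
      have h3 : φ u ≤ φ 0 := hu
      nlinarith
    obtain ⟨u, hu, hmin⟩ := hK.exists_isMinOn ⟨0, S.zero_mem, le_refl (φ 0)⟩ hφc.continuousOn
    refine ⟨u, hu.1, fun w hw => ?_⟩
    by_cases h : φ w ≤ φ 0
    · exact hmin ⟨hw, h⟩
    · exact le_trans hu.2 (le_of_not_ge h)
  obtain ⟨u, ⟨z, hz⟩, hu⟩ := hmin
  refine ⟨fun j => u (Sum.inl j), fun l => u (Sum.inr l), ⟨z, ?_⟩, ?_⟩
  · rw [← Matrix.mulVecLin_apply, hz]; ext (j | j) <;> rfl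
  set F : Fin σ ⊕ Fin m → ℝ := Sum.elim ((fun j => u (Sum.inl j)) + c) (g fun l => u (Sum.inr l))
    with hF
  have hzero : ∀ h ∈ S, F ⬝ᵥ h = 0 := by
    intro h hh
    have hd : HasDerivAt (fun t : ℝ => φ (u + t • h)) (F ⬝ᵥ h) 0 := by
      have h1 : HasDerivAt (fun t : ℝ => 1 / 2 * ∑ j, ((u + t • h) (Sum.inl j) + c j) ^ 2)
          (1 / 2 * ∑ j, 2 * (u (Sum.inl j) + c j) * h (Sum.inl j)) 0 := by
        refine HasDerivAt.const_mul _ (HasDerivAt.fun_sum fun j _ => ?_)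
        have h3 : HasDerivAt (fun t : ℝ => (u + t • h) (Sum.inl j) + c j) (h (Sum.inl j)) 0 := by
          simpa using (((hasDerivAt_id (0:ℝ)).mul_const (h (Sum.inl j))).const_add
            (u (Sum.inl j))).add_const (c j)
        refine HasDerivAt.congr_deriv (h3.pow 2) ?_
        simp
      have h2 := hasDerivAt_line hgrad (fun l => u (Sum.inr l)) (fun l => h (Sum.inr l))
      have h3 := h1.add h2
      refine HasDerivAt.congr_deriv h3 ?_
      simp only [hF, dotProduct, Fintype.sum_sum_type, Sum.elim_inl, Sum.elim_inr, Pi.add_apply,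
        Finset.mul_sum]
      congr 1
      exact Finset.sum_congr rfl fun j _ => by ring
    have hlm : IsLocalMin (fun t : ℝ => φ (u + t • h)) 0 := by
      refine Filter.Eventually.of_forall fun t => ?_
      simpa using hu (u + t • h) (S.add_mem ⟨z, hz⟩ (S.smul_mem t hh))
    exact hlm.hasDerivAt_eq_zero hd
  have hB := hzero (B.transpose.mulVec (B.mulVec F)) ⟨B.mulVec F, rfl⟩
  rw [Matrix.dotProduct_mulVec, Matrix.vecMul_transpose] at hB
  exact dotProduct_self_eq_zero.1 hB

/-- **Maximal monotonicity of the circuit operator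
(key step in the proof of Theorem B.1).**  The operator `𝔸` on
`ℝ^{|𝒞|+|ℒ|}` whose graph consists of the pairs `((v_𝒞, i_ℒ), (−i_𝒞, −v_ℒ))`
arising from states satisfying `(i; y) ∈ ker B`, `(v; x) ∈ range Bᵀ`,
`y = ∇f(x)`, `v_ℛ = i_ℛ` is maximal monotone. -/
theorem circuit_operator_maximal_monotone {m σ k : ℕ} (μ M : ℝ)
    (hμ : 0 < μ) (hμM : μ ≤ M)
    (f : (Fin m → ℝ) → ℝ) (g : (Fin m → ℝ) → Fin m → ℝ)
    (hgrad : HasGradient f g)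
    (hsc : StronglyConvexFun μ f) (hsm : GradLipschitz M g)
    (B : Matrix (Fin k) (Fin σ ⊕ Fin m) ℝ)
    (Rset Lset Cset : Finset (Fin σ))
    (hRL : Disjoint Rset Lset) (hRC : Disjoint Rset Cset) (hLC : Disjoint Lset Cset)
    (hcover : Rset ∪ Lset ∪ Cset = Finset.univ) :
    MaximalMonoGraph
      {q : (({j : Fin σ // j ∈ Cset} ⊕ {j : Fin σ // j ∈ Lset}) → ℝ) ×
           (({j : Fin σ // j ∈ Cset} ⊕ {j : Fin σ // j ∈ Lset}) → ℝ) |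
        ∃ (v i : Fin σ → ℝ) (x y : Fin m → ℝ),
          (∀ jc : {j : Fin σ // j ∈ Cset},
            q.1 (Sum.inl jc) = v jc.1 ∧ q.2 (Sum.inl jc) = -(i jc.1)) ∧
          (∀ jl : {j : Fin σ // j ∈ Lset},
            q.1 (Sum.inr jl) = i jl.1 ∧ q.2 (Sum.inr jl) = -(v jl.1)) ∧
          B.mulVec (Sum.elim i y) = 0 ∧
          (∃ z : Fin k → ℝ, Sum.elim v x = B.transpose.mulVec z) ∧
          y = g x ∧
          (∀ j ∈ Rset, v j = i j)} := by
  constructor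
  · rintro q₁ ⟨v, i, x, y, hC, hL, hk, ⟨z, hz⟩, rfl, hR⟩ q₂ ⟨v', i', x', y', hC', hL', hk', ⟨z', hz'⟩, rfl, hR'⟩
    have horth : Sum.elim (i - i') (g x - g x') ⬝ᵥ Sum.elim (v - v') (x - x') = 0 := by
      have e1 : Sum.elim (i - i') (g x - g x') = Sum.elim i (g x) - Sum.elim i' (g x') := by
        ext (j | j) <;> simp
      have e2 : Sum.elim (v - v') (x - x') = Bᵀ *ᵥ (z - z') := by
        rw [Matrix.mulVec_sub, ← hz, ← hz']
        ext (j | j) <;> simp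
      rw [e2, Matrix.dotProduct_mulVec, Matrix.vecMul_transpose, e1, Matrix.mulVec_sub, hk, hk']
      simp
    rw [sumElim_dotProduct_sumElim] at horth
    have hm := grad_mono hμ hgrad hsc x x'
    have hsplit : (i - i') ⬝ᵥ (v - v') = ∑ j ∈ Rset, (i j - i' j) * (v j - v' j)
        + ∑ j ∈ Lset, (i j - i' j) * (v j - v' j) + ∑ j ∈ Cset, (i j - i' j) * (v j - v' j) := by
      rw [← Finset.sum_union hRL, ← Finset.sum_union (Finset.disjoint_union_left.2 ⟨hRC, hLC⟩),
        hcover]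
      rfl
    have hRn : 0 ≤ ∑ j ∈ Rset, (i j - i' j) * (v j - v' j) := by
      refine Finset.sum_nonneg fun j hj => ?_
      rw [hR j hj, hR' j hj]
      exact mul_self_nonneg _
    have hCs : ∑ a : {j : Fin σ // j ∈ Cset}, (q₁.2 (Sum.inl a) - q₂.2 (Sum.inl a)) *
        (q₁.1 (Sum.inl a) - q₂.1 (Sum.inl a)) = -∑ j ∈ Cset, (i j - i' j) * (v j - v' j) := by
      rw [← Finset.sum_coe_sort Cset, ← Finset.sum_neg_distrib]
      refine Finset.sum_congr rfl fun a _ => ?_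
      rw [(hC a).1, (hC a).2, (hC' a).1, (hC' a).2]; ring
    have hLs : ∑ a : {j : Fin σ // j ∈ Lset}, (q₁.2 (Sum.inr a) - q₂.2 (Sum.inr a)) *
        (q₁.1 (Sum.inr a) - q₂.1 (Sum.inr a)) = -∑ j ∈ Lset, (i j - i' j) * (v j - v' j) := by
      rw [← Finset.sum_coe_sort Lset, ← Finset.sum_neg_distrib]
      refine Finset.sum_congr rfl fun a _ => ?_
      rw [(hL a).1, (hL a).2, (hL' a).1, (hL' a).2]; ring
    rw [Fintype.sum_sum_type, hCs, hLs]
    linarith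
  · intro G' hG' hsub
    refine Set.Subset.antisymm (fun q' hq' => ?_) hsub
    let c : Fin σ → ℝ := fun j =>
      if h : j ∈ Cset then -(q'.1 (Sum.inl ⟨j, h⟩) + q'.2 (Sum.inl ⟨j, h⟩))
      else if h : j ∈ Lset then q'.1 (Sum.inr ⟨j, h⟩) + q'.2 (Sum.inr ⟨j, h⟩) else 0
    have hcC : ∀ a : {j : Fin σ // j ∈ Cset}, c a.1 = -(q'.1 (Sum.inl a) + q'.2 (Sum.inl a)) :=
      fun a => by simp only [c, dif_pos a.2]
    have hcL : ∀ a : {j : Fin σ // j ∈ Lset}, c a.1 = q'.1 (Sum.inr a) + q'.2 (Sum.inr a) :=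
      fun a => by simp only [c, dif_neg (Finset.disjoint_left.1 hLC a.2), dif_pos a.2]
    have hcR : ∀ j ∈ Rset, c j = 0 := fun j hj => by
      simp only [c, dif_neg (Finset.disjoint_left.1 hRC hj),
        dif_neg (Finset.disjoint_left.1 hRL hj)]
    obtain ⟨v, x, hz, hk⟩ := circuit_resolvent hμ hgrad hsc B c
    let q : (({j : Fin σ // j ∈ Cset} ⊕ {j : Fin σ // j ∈ Lset}) → ℝ) ×
        (({j : Fin σ // j ∈ Cset} ⊕ {j : Fin σ // j ∈ Lset}) → ℝ) :=
      (Sum.elim (fun a => v a.1) (fun a => (v + c) a.1),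
        Sum.elim (fun a => -(v + c) a.1) (fun a => -(v a.1)))
    have hq : ∃ (v i : Fin σ → ℝ) (x y : Fin m → ℝ),
          (∀ jc : {j : Fin σ // j ∈ Cset},
            q.1 (Sum.inl jc) = v jc.1 ∧ q.2 (Sum.inl jc) = -(i jc.1)) ∧
          (∀ jl : {j : Fin σ // j ∈ Lset},
            q.1 (Sum.inr jl) = i jl.1 ∧ q.2 (Sum.inr jl) = -(v jl.1)) ∧
          B.mulVec (Sum.elim i y) = 0 ∧
          (∃ z : Fin k → ℝ, Sum.elim v x = B.transpose.mulVec z) ∧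
          y = g x ∧
          (∀ j ∈ Rset, v j = i j) :=
      ⟨v, v + c, x, g x, fun a => ⟨rfl, rfl⟩, fun a => ⟨rfl, rfl⟩, hk, hz, rfl,
        fun j hj => by simp [hcR j hj]⟩
    have hsum : ∀ l, q.1 l + q.2 l = q'.1 l + q'.2 l := by
      rintro (a | a)
      · simp only [q, Sum.elim_inl, Pi.add_apply, hcC a]; ring
      · simp only [q, Sum.elim_inr, Pi.add_apply, hcL a]; ring
    have hmon := hG' q' hq' q (hsub hq)
    have e : ∑ l, (q'.2 l - q.2 l) * (q'.1 l - q.1 l) = -∑ l, (q'.1 l - q.1 l) ^ 2 := by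
      rw [← Finset.sum_neg_distrib]
      refine Finset.sum_congr rfl fun l _ => ?_
      linear_combination -(q'.1 l - q.1 l) * hsum l
    rw [e] at hmon
    have h0 : ∑ l, (q'.1 l - q.1 l) ^ 2 = 0 :=
      le_antisymm (by linarith) (Finset.sum_nonneg fun l _ => sq_nonneg _)
    rw [Finset.sum_eq_zero_iff_of_nonneg (fun l _ => sq_nonneg _)] at h0
    have h1 : ∀ l, q'.1 l = q.1 l := fun l =>
      sub_eq_zero.1 (pow_eq_zero_iff (two_ne_zero)|>.1 (h0 l (Finset.mem_univ l)))
    have hqq : q' = q := by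
      refine Prod.ext (funext h1) (funext fun l => ?_)
      have := hsum l
      have := h1 l
      linarith
    rw [hqq]
    exact hq
end

section
/- Equilibrium currents and voltages on resistors vanish (Lemma C.1). Let A ∈ ℝ^{(τ−1)×σ} (τ ≥ m+1), {1,…,σ} partitioned into ℛ, ℒ, 𝒞, and D_ℛ, D_ℒ, D_𝒞 diagonal matrices with strictly positive diagonal entries, and assume the dynamic interconnect is admissible with respect to a selection matrix E ∈ ℝ^{n×m}. Then for every (x, y) ∈ ℝ^m × ℝ^m and every (v, i) ∈ D_{x,y}, one has v_ℛ = 0 and i_ℛ = 0. -/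
open Matrix

/-- Membership `(v, i) ∈ D_{x,y}`: there is an internal-node potential `e` with
`A i = (−y; 0)` (KCL), `v = Aᵀ(x; e)` (KVL), `v_ℛ = D_ℛ i_ℛ`, `v_ℒ = 0`, `i_𝒞 = 0`.
Nodes are indexed by `Fin m ⊕ Fin p` (terminals and internal nodes, ground removed). -/
def MemDxy {m p σ : ℕ} (A : Matrix (Fin m ⊕ Fin p) (Fin σ) ℝ)
    (Rset Lset Cset : Finset (Fin σ)) (dR : Fin σ → ℝ)
    (x y : Fin m → ℝ) (v i : Fin σ → ℝ) : Prop :=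
  (∃ e : Fin p → ℝ,
      A.mulVec i = Sum.elim (fun a => -(y a)) (fun _ => (0 : ℝ)) ∧
      v = A.transpose.mulVec (Sum.elim x e)) ∧
  (∀ j ∈ Rset, v j = dR j * i j) ∧
  (∀ j ∈ Lset, v j = 0) ∧
  (∀ j ∈ Cset, i j = 0)

/-- `E` is a selection matrix: for some assignment of each terminal `j` to a net
`netOf j` (every net nonempty), `E i j = 1` if `j ∈ N_i` and `0` otherwise. -/
def IsSelectionMatrix {n m : ℕ} (E : Matrix (Fin n) (Fin m) ℝ) : Prop :=
  ∃ netOf : Fin m → Fin n, Function.Surjective netOf ∧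
    ∀ i j, E i j = if netOf j = i then 1 else 0

/-- Admissibility of the dynamic interconnect with respect to `E`:
`{(x,y) : ∃ (v,i) ∈ D_{x,y}} = ℛ(Eᵀ) × 𝒩(E)`. -/
def AdmissibleInterconnect {m p σ n : ℕ} (A : Matrix (Fin m ⊕ Fin p) (Fin σ) ℝ)
    (Rset Lset Cset : Finset (Fin σ)) (dR : Fin σ → ℝ)
    (E : Matrix (Fin n) (Fin m) ℝ) : Prop :=
  ∀ x y : Fin m → ℝ,
    (∃ v i : Fin σ → ℝ, MemDxy A Rset Lset Cset dR x y v i) ↔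
      ((∃ z : Fin n → ℝ, x = E.transpose.mulVec z) ∧ E.mulVec y = 0)

/-- **Equilibrium currents and voltages on resistors vanish (Lemma C.1).**
If the dynamic interconnect is admissible with respect to a selection matrix `E`,
then for every `(x, y)` and every `(v, i) ∈ D_{x,y}` one has `v_ℛ = 0` and `i_ℛ = 0`. -/
theorem equilibrium_resistors_vanish {m p σ n : ℕ}
    (A : Matrix (Fin m ⊕ Fin p) (Fin σ) ℝ)
    (Rset Lset Cset : Finset (Fin σ))
    (hRL : Disjoint Rset Lset) (hRC : Disjoint Rset Cset) (hLC : Disjoint Lset Cset)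
    (hcover : Rset ∪ Lset ∪ Cset = Finset.univ)
    (dR dL dC : Fin σ → ℝ)
    (hdR : ∀ j ∈ Rset, 0 < dR j) (hdL : ∀ j ∈ Lset, 0 < dL j)
    (hdC : ∀ j ∈ Cset, 0 < dC j)
    (E : Matrix (Fin n) (Fin m) ℝ) (hE : IsSelectionMatrix E)
    (hadm : AdmissibleInterconnect A Rset Lset Cset dR E) :
    ∀ (x y : Fin m → ℝ) (v i : Fin σ → ℝ),
      MemDxy A Rset Lset Cset dR x y v i →
        (∀ j ∈ Rset, v j = 0) ∧ (∀ j ∈ Rset, i j = 0) := by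
  intro x y v i h
  obtain ⟨⟨z, hz⟩, hy⟩ := (hadm x y).1 ⟨v, i, h⟩
  obtain ⟨⟨e, hA, hv⟩, hR, hL, hC⟩ := h
  have hxy : x ⬝ᵥ y = 0 := by
    rw [hz, Matrix.mulVec_transpose, ← Matrix.dotProduct_mulVec, hy, dotProduct_zero]
  have hvi : v ⬝ᵥ i = 0 := by
    rw [hv, Matrix.mulVec_transpose, ← Matrix.dotProduct_mulVec, hA]
    simp only [dotProduct, Fintype.sum_sum_type, Sum.elim_inl, Sum.elim_inr, mul_zero,
      Finset.sum_const_zero, add_zero, mul_neg, Finset.sum_neg_distrib]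
    simpa [dotProduct] using hxy
  have hnn : ∀ j ∈ Finset.univ, 0 ≤ v j * i j := by
    intro j hj
    rw [← hcover, Finset.mem_union, Finset.mem_union] at hj
    rcases hj with (hj | hj) | hj
    · rw [hR j hj, mul_assoc]
      exact mul_nonneg (hdR j hj).le (mul_self_nonneg _)
    · simp [hL j hj]
    · simp [hC j hj]
  have hz0 := (Finset.sum_eq_zero_iff_of_nonneg hnn).1 hvi
  have hi : ∀ j ∈ Rset, i j = 0 := by
    intro j hj
    have h1 := hz0 j (Finset.mem_univ j)
    rw [hR j hj] at h1
    have h2 := (hdR j hj).ne'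
    simpa [h2] using h1
  exact ⟨fun j hj => by rw [hR j hj, hi j hj, mul_zero], hi⟩
end

section
/- Existence of an equilibrium at a primal–dual solution (Theorem C.2, first part). Let f: ℝ^m → ℝ ∪ {∞} be convex, A ∈ ℝ^{(τ−1)×σ} (τ ≥ m+1), {1,…,σ} partitioned into ℛ, ℒ, 𝒞, and D_ℛ, D_ℒ, D_𝒞 diagonal with strictly positive diagonal entries; assume the dynamic interconnect is admissible with respect to a selection matrix E ∈ ℝ^{n×m}. If (x⋆, y⋆) is a primal–dual solution pair, i.e., y⋆ ∈ ∂f(x⋆), x⋆ ∈ ℛ(Eᵀ), y⋆ ∈ 𝒩(E), then there exist v_𝒞 ∈ ℝ^{|𝒞|} and i_ℒ ∈ ℝ^{|ℒ|} such that ((0, 0, v_𝒞), (0, i_ℒ, 0)) ∈ D_{x⋆, y⋆}. -/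
open Matrix

/-- `y` is a subgradient of the extended-real-valued `f` at `x`:
`f(z) ≥ f(x) + ⟨y, z − x⟩` for all `z`. -/
def ESubgradAt {m : ℕ} (f : (Fin m → ℝ) → EReal) (y x : Fin m → ℝ) : Prop :=
  ∀ z : Fin m → ℝ, f x + ((y ⬝ᵥ (z - x) : ℝ) : EReal) ≤ f z

/-- Convexity of an extended-real-valued function. -/
def EConvex {m : ℕ} (f : (Fin m → ℝ) → EReal) : Prop :=
  ∀ x z : Fin m → ℝ, ∀ a b : ℝ, 0 ≤ a → 0 ≤ b → a + b = 1 →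
    f (a • x + b • z) ≤ (a : EReal) * f x + (b : EReal) * f z

/-- **Existence of an equilibrium at a primal–dual solution
(Theorem C.2, first part).**  If `(x⋆, y⋆)` is a primal–dual solution pair,
then there is an equilibrium state `((0, 0, v_𝒞), (0, i_ℒ, 0)) ∈ D_{x⋆,y⋆}`. -/
theorem equilibrium_exists_at_solution {m p σ n : ℕ}
    (f : (Fin m → ℝ) → EReal) (hconv : EConvex f) (hnb : ∀ x, f x ≠ ⊥)
    (A : Matrix (Fin m ⊕ Fin p) (Fin σ) ℝ)
    (Rset Lset Cset : Finset (Fin σ))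
    (hRL : Disjoint Rset Lset) (hRC : Disjoint Rset Cset) (hLC : Disjoint Lset Cset)
    (hcover : Rset ∪ Lset ∪ Cset = Finset.univ)
    (dR dL dC : Fin σ → ℝ)
    (hdR : ∀ j ∈ Rset, 0 < dR j) (hdL : ∀ j ∈ Lset, 0 < dL j)
    (hdC : ∀ j ∈ Cset, 0 < dC j)
    (E : Matrix (Fin n) (Fin m) ℝ) (hE : IsSelectionMatrix E)
    (hadm : AdmissibleInterconnect A Rset Lset Cset dR E)
    (xstar ystar : Fin m → ℝ)
    (hsub : ESubgradAt f ystar xstar)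
    (hprim : ∃ z : Fin n → ℝ, xstar = E.transpose.mulVec z)
    (hdual : E.mulVec ystar = 0) :
    ∃ v i : Fin σ → ℝ,
      MemDxy A Rset Lset Cset dR xstar ystar v i ∧
      (∀ j ∈ Rset, v j = 0 ∧ i j = 0) := by
  obtain ⟨v, i, hmem⟩ := (hadm xstar ystar).2 ⟨hprim, hdual⟩
  refine ⟨v, i, hmem, ?_⟩
  obtain ⟨⟨e, hi, hv⟩, hR, hL, hC⟩ := hmem
  obtain ⟨z, hz⟩ := hprim
  have hxy : xstar ⬝ᵥ ystar = 0 := by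
    rw [hz, Matrix.mulVec_transpose, ← Matrix.dotProduct_mulVec, hdual, dotProduct_zero]
  have h0 : v ⬝ᵥ i = 0 := by
    rw [hv, Matrix.mulVec_transpose, ← Matrix.dotProduct_mulVec, hi]
    simp only [dotProduct, Fintype.sum_sum_type, Sum.elim_inl, Sum.elim_inr, mul_neg, mul_zero,
      Finset.sum_neg_distrib, Finset.sum_const_zero, add_zero, neg_eq_zero]
    exact hxy
  have hnn : ∀ j ∈ Finset.univ, 0 ≤ v j * i j := by
    intro j hj
    rw [← hcover, Finset.mem_union, Finset.mem_union] at hj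
    rcases hj with (hj | hj) | hj
    · rw [hR j hj, mul_assoc]
      exact mul_nonneg (hdR j hj).le (mul_self_nonneg _)
    · simp [hL j hj]
    · simp [hC j hj]
  have hall := (Finset.sum_eq_zero_iff_of_nonneg hnn).1 h0
  intro j hj
  have h1 := hall j (Finset.mem_univ j)
  have h2 := hR j hj
  have h3 : i j = 0 := by
    rw [h2] at h1
    have := (hdR j hj).ne'
    simpa [this] using h1
  exact ⟨by rw [h2, h3, mul_zero], h3⟩
end

section
/- Equilibria of the circuit yield primal–dual solutions (Theorem C.2, second part). Let f: ℝ^m → ℝ ∪ {∞} be convex, A ∈ ℝ^{(τ−1)×σ} (τ ≥ m+1), {1,…,σ} partitioned into ℛ, ℒ, 𝒞, and D_ℛ, D_ℒ, D_𝒞 diagonal with strictly positive diagonal entries; assume the dynamic interconnect is admissible with respect to a selection matrix E ∈ ℝ^{n×m}. If y ∈ ∂f(x) and ((v_ℛ, v_ℒ, v_𝒞), (i_ℛ, i_ℒ, i_𝒞)) ∈ D_{x,y}, then v_ℛ = 0, i_ℛ = 0, and (x, y) is a primal–dual solution pair: x ∈ ℛ(Eᵀ), y ∈ 𝒩(E),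 and y ∈ ∂f(x); in particular x minimizes f over ℛ(Eᵀ). -/
open Matrix

/-- **Equilibria of the circuit yield primal–dual solutions
(Theorem C.2, second part).**  If `y ∈ ∂f(x)` and `(v, i) ∈ D_{x,y}` then
`v_ℛ = 0`, `i_ℛ = 0`, and `(x, y)` is a primal–dual solution pair; in
particular `x` minimizes `f` over `ℛ(Eᵀ)`. -/
theorem equilibrium_yields_solution {m p σ n : ℕ}
    (f : (Fin m → ℝ) → EReal) (hconv : EConvex f) (hnb : ∀ x, f x ≠ ⊥)
    (A : Matrix (Fin m ⊕ Fin p) (Fin σ) ℝ)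
    (Rset Lset Cset : Finset (Fin σ))
    (hRL : Disjoint Rset Lset) (hRC : Disjoint Rset Cset) (hLC : Disjoint Lset Cset)
    (hcover : Rset ∪ Lset ∪ Cset = Finset.univ)
    (dR dL dC : Fin σ → ℝ)
    (hdR : ∀ j ∈ Rset, 0 < dR j) (hdL : ∀ j ∈ Lset, 0 < dL j)
    (hdC : ∀ j ∈ Cset, 0 < dC j)
    (E : Matrix (Fin n) (Fin m) ℝ) (hE : IsSelectionMatrix E)
    (hadm : AdmissibleInterconnect A Rset Lset Cset dR E)
    (x y : Fin m → ℝ) (v i : Fin σ → ℝ)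
    (hsub : ESubgradAt f y x)
    (hD : MemDxy A Rset Lset Cset dR x y v i) :
    (∀ j ∈ Rset, v j = 0 ∧ i j = 0) ∧
    (∃ z : Fin n → ℝ, x = E.transpose.mulVec z) ∧
    E.mulVec y = 0 ∧
    ESubgradAt f y x ∧
    (∀ x' : Fin m → ℝ, (∃ z : Fin n → ℝ, x' = E.transpose.mulVec z) → f x ≤ f x') := by
  obtain ⟨⟨z, hz⟩, hy⟩ := (hadm x y).1 ⟨v, i, hD⟩
  have key : ∀ w : Fin n → ℝ, y ⬝ᵥ (E.transpose.mulVec w) = 0 := by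
    intro w
    rw [Matrix.dotProduct_mulVec, Matrix.vecMul_transpose, hy, zero_dotProduct]
  refine ⟨?_, ⟨z, hz⟩, hy, hsub, ?_⟩
  · obtain ⟨⟨e, hi, hv⟩, hR, hL, hC⟩ := hD
    have hsum : ∑ j, v j * i j = 0 := by
      have h1 : v ⬝ᵥ i = Sum.elim x e ⬝ᵥ A.mulVec i := by
        rw [hv, Matrix.mulVec_transpose, Matrix.dotProduct_mulVec]
      have h2 : y ⬝ᵥ x = 0 := by rw [hz]; exact key z
      have h3 : x ⬝ᵥ y = 0 := by rw [dotProduct_comm]; exact h2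
      rw [hi] at h1
      change v ⬝ᵥ i = 0
      rw [h1]
      simp only [dotProduct] at h3
      simp [dotProduct, Fintype.sum_sum_type, h3]
    have hnn : ∀ j ∈ Finset.univ, 0 ≤ v j * i j := by
      intro j hj
      rw [← hcover, Finset.mem_union, Finset.mem_union] at hj
      rcases hj with (hj | hj) | hj
      · rw [hR j hj, mul_assoc]
        exact mul_nonneg (hdR j hj).le (mul_self_nonneg _)
      · simp [hL j hj]
      · simp [hC j hj]
    intro j hj
    have h0 := (Finset.sum_eq_zero_iff_of_nonneg hnn).1 hsum j (Finset.mem_univ j)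
    have hij : i j = 0 := by
      rw [hR j hj, mul_assoc] at h0
      simpa [(hdR j hj).ne'] using h0
    exact ⟨by rw [hR j hj, hij, mul_zero], hij⟩
  · rintro x' ⟨w, hw⟩
    have h := hsub x'
    have h0 : y ⬝ᵥ (x' - x) = 0 := by
      rw [dotProduct_sub, hw, hz, key, key, sub_zero]
    rw [h0] at h
    simpa using h
end

section
/- Skew-symmetric coordinate representation of complementary subspaces (Lemma B.3). For every real k×n matrix B there exist a subset S ⊆ {1,…,n} and a skew-symmetric matrix Ĥ ∈ ℝ^{n×n} such that, writing J for the diagonal 0/1 matrix with J_{ll} = 1 iff l ∈ S, the following equivalence holds for all a, b ∈ ℝ^n: [a ∈ range(Bᵀ) and b ∈ ker(B)] if and only if (I − J)a + Jb = Ĥ (Ja + (I − J)b). -/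
open Matrix

/-- **Skew-symmetric coordinate representation of complementary subspaces
(Lemma B.3).**  For every real `k×n` matrix `B` there are a subset
`S ⊆ {1,…,n}` and a skew-symmetric `Ĥ` such that for all `a, b ∈ ℝⁿ`:
`a ∈ range Bᵀ ∧ b ∈ ker B` iff `(I−J)a + Jb = Ĥ(Ja + (I−J)b)`, where `J` is the
0/1 diagonal matrix of `S` (so `((I−J)a + Jb) l = if l ∈ S then b l else a l`). -/
theorem skew_symmetric_representation {k n : ℕ} (B : Matrix (Fin k) (Fin n) ℝ) :
    ∃ (S : Finset (Fin n)) (H : Matrix (Fin n) (Fin n) ℝ),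
      H.transpose = -H ∧
      ∀ a b : Fin n → ℝ,
        ((∃ z : Fin k → ℝ, a = B.transpose.mulVec z) ∧ B.mulVec b = 0) ↔
          (fun l => if l ∈ S then b l else a l) =
            H.mulVec (fun l => if l ∈ S then a l else b l) := by
  classical
  set v : Fin n → (Fin k → ℝ) := fun l i => B i l with hv
  obtain ⟨T, -, -, hspan, hli⟩ := exists_linearIndepOn_extension
    (K := ℝ) (v := v) (linearIndepOn_empty ℝ v) (Set.subset_univ _)
  set S : Finset (Fin n) := T.toFinset with hS
  have hT : T = (S : Set (Fin n)) := by simp [hS]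
  rw [hT] at hspan hli
  clear_value S
  have hM : ∀ l, ∃ c : Fin n → ℝ, v l = ∑ s ∈ S, c s • v s := by
    intro l
    have h := hspan ⟨l, Set.mem_univ _, rfl⟩
    obtain ⟨c, hc⟩ := (Submodule.mem_span_image_finset_iff_exists_fun ℝ).1 h
    refine ⟨fun s => if hs : s ∈ S then c ⟨s, hs⟩ else 0, ?_⟩
    rw [← hc, ← Finset.sum_coe_sort S]
    exact Finset.sum_congr rfl fun s _ => by simp
  choose M hM using hM
  have hind : ∀ g : Fin n → ℝ, ∑ s ∈ S, g s • v s = 0 → ∀ s ∈ S, g s = 0 :=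
    fun g hg => linearIndepOn_finset_iff.1 hli g hg
  have hfun : ∀ a : Fin n → ℝ, ∃ z : Fin k → ℝ, ∀ s ∈ S, a s = ∑ i, B i s * z i := by
    intro a
    obtain ⟨g, hg⟩ := LinearMap.exists_leftInverse_of_injective _
      (LinearMap.ker_eq_bot.2 hli)
    let f : (Fin k → ℝ) →ₗ[ℝ] ℝ :=
      (Finsupp.linearCombination ℝ (fun s : (S : Set (Fin n)) => a s)) ∘ₗ g
    refine ⟨fun i => f (Pi.single i 1), fun s hs => ?_⟩
    have h1 : f (v s) = a s := by
      have := LinearMap.congr_fun hg (Finsupp.single ⟨s, hs⟩ 1)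
      simp at this
      simp [f, this]
    rw [← h1, LinearMap.pi_apply_eq_sum_univ f (v s)]
    refine Finset.sum_congr rfl fun i _ => ?_
    simp only [hv, smul_eq_mul]
    congr 2
    ext j
    simp [Pi.single_apply, eq_comm]
  let H : Matrix (Fin n) (Fin n) ℝ := Matrix.of fun l m =>
    if l ∈ S then (if m ∈ S then 0 else - M m l) else (if m ∈ S then M l m else 0)
  have hH1 : ∀ (a b : Fin n → ℝ) l, l ∉ S →
      H.mulVec (fun l => if l ∈ S then a l else b l) l = ∑ m ∈ S, M l m * a m := by
    intro a b l hl
    rw [Matrix.mulVec, dotProduct, ← Finset.sum_subset (Finset.subset_univ S)]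
    · refine Finset.sum_congr rfl fun m hm => ?_
      simp [H, hl, hm]
    · intro m _ hm
      simp [H, hl, hm]
  have hH2 : ∀ (a b : Fin n → ℝ) l, l ∈ S →
      H.mulVec (fun l => if l ∈ S then a l else b l) l = - ∑ m ∈ Sᶜ, M m l * b m := by
    intro a b l hl
    rw [← Finset.sum_neg_distrib, Matrix.mulVec, dotProduct,
      ← Finset.sum_subset (Finset.subset_univ Sᶜ)]
    · refine Finset.sum_congr rfl fun m hm => ?_
      have hm := Finset.mem_compl.1 hm
      simp [H, hl, hm]
    · intro m _ hm
      have hm : m ∈ S := by simpa using hm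
      simp [H, hl, hm]
  have hB : ∀ b, B.mulVec b = ∑ s ∈ S, (b s + ∑ m ∈ Sᶜ, M m s * b m) • v s := by
    intro b
    have h0 : B.mulVec b = ∑ l, b l • v l := by
      ext i
      simp [Matrix.mulVec, dotProduct, hv, mul_comm]
    have h1 : ∑ m ∈ Sᶜ, b m • v m = ∑ s ∈ S, (∑ m ∈ Sᶜ, M m s * b m) • v s := by
      simp_rw [Finset.sum_smul]
      rw [Finset.sum_comm]
      refine Finset.sum_congr rfl fun m _ => ?_
      conv_lhs => rw [hM m]
      rw [Finset.smul_sum]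
      refine Finset.sum_congr rfl fun s _ => ?_
      rw [smul_smul, mul_comm]
    rw [h0, ← Finset.sum_add_sum_compl S, h1, ← Finset.sum_add_distrib]
    simp_rw [add_smul]
  have hz : ∀ (z : Fin k → ℝ) l,
      ∑ i, B i l * z i = ∑ s ∈ S, M l s * ∑ i, B i s * z i := by
    intro z l
    simp_rw [Finset.mul_sum]
    rw [Finset.sum_comm]
    refine Finset.sum_congr rfl fun i _ => ?_
    have h := congrFun (hM l) i
    simp only [hv, Finset.sum_apply, Pi.smul_apply, smul_eq_mul] at h
    rw [h, Finset.sum_mul]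
    simp_rw [mul_assoc]
  refine ⟨S, H, ?_, fun a b => ⟨?_, ?_⟩⟩
  · ext l m
    by_cases hl : l ∈ S <;> by_cases hm : m ∈ S <;> simp [H, hl, hm]
  · rintro ⟨⟨z, rfl⟩, hb⟩
    funext l
    by_cases hl : l ∈ S
    · rw [hH2 _ _ l hl, if_pos hl]
      rw [hB] at hb
      have := hind _ hb l hl
      linarith
    · rw [hH1 _ _ l hl, if_neg hl]
      exact hz z l
  · intro h
    have ha : ∀ l, l ∉ S → a l = ∑ m ∈ S, M l m * a m := by
      intro l hl
      have := congrFun h l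
      rwa [hH1 _ _ l hl, if_neg hl] at this
    have hb : ∀ l, l ∈ S → b l = - ∑ m ∈ Sᶜ, M m l * b m := by
      intro l hl
      have := congrFun h l
      rwa [hH2 _ _ l hl, if_pos hl] at this
    constructor
    · obtain ⟨z, hza⟩ := hfun a
      refine ⟨z, funext fun l => ?_⟩
      change a l = ∑ i, B i l * z i
      by_cases hl : l ∈ S
      · exact hza l hl
      · rw [ha l hl, hz z l]
        exact Finset.sum_congr rfl fun s hs => by rw [hza s hs]
    · rw [hB]
      refine Finset.sum_eq_zero fun s hs => ?_
      rw [hb s hs, neg_add_cancel, zero_smul]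
end

section
/- Coordinate splitting of a subspace and its orthogonal complement (invertibility of the selection matrix G in the proof of Lemma B.3). For every linear subspace V ⊆ ℝ^n there exists a subset S ⊆ {1,…,n} with |S| = dim V such that the linear map V × V^⊥ → ℝ^n given by (a, b) ↦ Π_S a + Π_{S^c} b is a bijection, where Π_S denotes the coordinate projection of ℝ^n that keeps the entries indexed by S and sets the remaining entries to 0, and S^c = {1,…,n} \ S. -/
open Matrix

/-- **Coordinate splitting of a subspace and its orthogonal complement
(invertibility of the selection matrix `G` in the proof of Lemma B.3).**
For every linear subspace `V ⊆ ℝⁿ` there is a subset `S` of the coordinates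
with `|S| = dim V` such that `(a, b) ↦ Π_S a + Π_{Sᶜ} b` is a bijection from
`V × V^⊥` onto `ℝⁿ`, where `V^⊥ = {b : ⟨a, b⟩ = 0 for all a ∈ V}` is the
orthogonal complement for the Euclidean inner product. -/
theorem coordinate_splitting_subspace {n : ℕ} (V : Submodule ℝ (Fin n → ℝ)) :
    ∃ S : Finset (Fin n), S.card = Module.finrank ℝ V ∧
      Function.Bijective
        (fun q : V × {b : Fin n → ℝ // ∀ a ∈ V, a ⬝ᵥ b = 0} =>
          (fun l => if l ∈ S then (q.1 : Fin n → ℝ) l else (q.2 : Fin n → ℝ) l)) := by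
  classical
  let φ : Fin n → Module.Dual ℝ V := fun i => (LinearMap.proj i).comp V.subtype
  have hφ : ∀ i (a : V), φ i a = (a : Fin n → ℝ) i := fun i a => rfl
  obtain ⟨κ, s, hs, hspan, hli⟩ := exists_linearIndependent' ℝ φ
  haveI : Finite κ := Finite.of_injective s hs
  haveI : Fintype κ := Fintype.ofFinite κ
  have hinj0 : ∀ a : V, (∀ k, (a : Fin n → ℝ) (s k) = 0) → a = 0 := by
    intro a ha
    have h1 : Submodule.span ℝ (Set.range φ) ≤ LinearMap.ker (Module.Dual.eval ℝ V a) := by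
      rw [← hspan, Submodule.span_le]
      rintro _ ⟨k, rfl⟩
      exact ha k
    ext i
    exact h1 (Submodule.subset_span ⟨i, rfl⟩)
  let F : V →ₗ[ℝ] (κ → ℝ) := LinearMap.pi fun k => φ (s k)
  have hF : Function.Injective F := by
    rw [injective_iff_map_eq_zero]
    intro a ha
    exact hinj0 a fun k => congrFun ha k
  have hle : Fintype.card κ ≤ Module.finrank ℝ V := by
    rw [← Subspace.dual_finrank_eq]
    exact hli.fintype_card_le_finrank
  have hge : Module.finrank ℝ V ≤ Fintype.card κ := by
    simpa using LinearMap.finrank_le_finrank_of_injective hF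
  have hsurj : Function.Surjective F :=
    (LinearMap.injective_iff_surjective_of_finrank_eq_finrank
      (by simpa using le_antisymm hge hle)).1 hF
  have hmem : ∀ l, l ∈ Finset.univ.image s ↔ ∃ k, s k = l := by simp
  have hdot : ∀ a b : Fin n → ℝ, a ⬝ᵥ b = ∑ k, a (s k) * b (s k) +
      ∑ l, if l ∈ Finset.univ.image s then 0 else a l * b l := by
    intro a b
    have h1 : ∑ k, a (s k) * b (s k) =
        ∑ l, if l ∈ Finset.univ.image s then a l * b l else 0 := by
      rw [← Finset.sum_image (s := Finset.univ) (g := s) (f := fun l => a l * b l)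
        (fun x _ y _ h => hs h), Finset.sum_ite_mem, Finset.univ_inter]
    rw [h1, ← Finset.sum_add_distrib]
    refine Finset.sum_congr rfl fun l _ => ?_
    split_ifs <;> simp
  refine ⟨Finset.univ.image s, ?_, ?_, ?_⟩
  · rw [Finset.card_image_of_injective _ hs, Finset.card_univ]
    exact le_antisymm hle hge
  · rintro ⟨a, b, hb⟩ ⟨a', b', hb'⟩ h
    have hl := fun l => congrFun h l
    simp only at hl
    have haa : a = a' := by
      apply hF
      funext k
      have := hl (s k)
      rwa [if_pos ((hmem _).2 ⟨k, rfl⟩), if_pos ((hmem _).2 ⟨k, rfl⟩)] at this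
    have hz : ∀ l, l ∉ Finset.univ.image s → (b - b') l = 0 := by
      intro l hls
      have := hl l
      rw [if_neg hls, if_neg hls] at this
      simp [this]
    obtain ⟨c, hc⟩ := hsurj fun k => (b - b') (s k)
    have hck : ∀ k, (c : Fin n → ℝ) (s k) = (b - b') (s k) := fun k => congrFun hc k
    have h0 : (c : Fin n → ℝ) ⬝ᵥ (b - b') = 0 := by
      rw [dotProduct_sub, hb _ c.2, hb' _ c.2, sub_zero]
    rw [hdot, Finset.sum_eq_zero (s := Finset.univ) (f := fun l => ite _ _ _), add_zero] at h0
    · simp only [hck] at h0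
      rw [Finset.sum_eq_zero_iff_of_nonneg (fun k _ => mul_self_nonneg _)] at h0
      have hbb : b = b' := by
        funext l
        rw [← sub_eq_zero]
        by_cases hls : l ∈ Finset.univ.image s
        · obtain ⟨k, rfl⟩ := (hmem l).1 hls
          exact mul_self_eq_zero.1 (h0 k (Finset.mem_univ _))
        · exact hz l hls
      subst haa hbb
      rfl
    · intro l _
      split_ifs with hls
      · rfl
      · rw [hz l hls, mul_zero]
  · intro y
    obtain ⟨a, ha⟩ := hsurj fun k => y (s k)
    have hψ : (-∑ l, if l ∈ Finset.univ.image s then 0 else y l • φ l) ∈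
        Submodule.span ℝ (Set.range (φ ∘ s)) := by
      rw [hspan]
      refine Submodule.neg_mem _ (Submodule.sum_mem _ fun l _ => ?_)
      split_ifs
      · exact Submodule.zero_mem _
      · exact Submodule.smul_mem _ _ (Submodule.subset_span ⟨l, rfl⟩)
    obtain ⟨c, hc⟩ := (Submodule.mem_span_range_iff_exists_fun ℝ).1 hψ
    let b : Fin n → ℝ := fun l => if h : ∃ k, s k = l then c h.choose else y l
    have hbs : ∀ k, b (s k) = c k := by
      intro k
      have h : ∃ k', s k' = s k := ⟨k, rfl⟩
      simp only [b, dif_pos h]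
      rw [hs h.choose_spec]
    have hbn : ∀ l, l ∉ Finset.univ.image s → b l = y l := by
      intro l hls
      rw [hmem] at hls
      simp only [b, dif_neg hls]
    refine ⟨⟨a, b, ?_⟩, ?_⟩
    · intro x hx
      have h := congrArg (fun f : Module.Dual ℝ V => f ⟨x, hx⟩) hc
      simp only [LinearMap.sum_apply, LinearMap.smul_apply, LinearMap.neg_apply,
        Function.comp, hφ, smul_eq_mul] at h
      rw [hdot]
      have h1 : ∑ k, x (s k) * b (s k) = ∑ k, c k * x (s k) :=
        Finset.sum_congr rfl fun k _ => by rw [hbs, mul_comm]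
      rw [h1, h, neg_add_eq_zero]
      refine Finset.sum_congr rfl fun l _ => ?_
      split_ifs with hls
      · rfl
      · rw [hbn l hls, LinearMap.smul_apply, hφ, smul_eq_mul, mul_comm]
    · funext l
      by_cases hls : l ∈ Finset.univ.image s
      · simp only [if_pos hls]
        obtain ⟨k, rfl⟩ := (hmem l).1 hls
        exact congrFun ha k
      · simp only [if_neg hls]
        exact hbn l hls
end

section
/- Strong monotonicity of the partial inverse of a strongly monotone, cocoercive operator (intermediate claim in the proof of Lemma B.5). Let μ, β > 0 and let 𝔸: ℝ^d ⇉ ℝ^d be a set-valued operator such that for all (x₁, y₁), (x₂, y₂) in its graph: ⟨y₁ − y₂, x₁ − x₂⟩ ≥ μ‖x₁ − x₂‖² and ⟨y₁ − y₂, x₁ − x₂⟩ ≥ β‖y₁ − y₂‖². Let K ⊆ ℝ^d be a linear subspace, Q ∈ ℝ^{d×d} a permutation matrix, and H₀ ∈ ℝ^{d×d} a skew-symmetric matrix. Then the operator T(w) = { Q u − H₀ w : u ∈ 𝔸_K(Qᵀ w) } is (min{μ, β}/2)-strongly monotone: for all (w₁, u₁), (w₂, u₂) in the graph of T, ⟨u₁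 − u₂, w₁ − w₂⟩ ≥ (min{μ, β}/2) ‖w₁ − w₂‖². -/
open Matrix

/-- **Strong monotonicity of the partial inverse of a strongly monotone,
cocoercive operator (intermediate claim in the proof of Lemma B.5).**
Here `K` is encoded by its orthogonal projection matrix `P` (symmetric,
idempotent), `Q` is a permutation matrix, `H₀` is skew-symmetric, and the
operator `T(w) = { Q u − H₀ w : u ∈ 𝔸_K(Qᵀ w) }` is described through its
graph: `(w, b) ∈ gra T` iff there is `(x, y) ∈ gra 𝔸` with
`Qᵀ w = P x + (I − P) y` and `b = Q (P y + (I − P) x) − H₀ w`. -/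
theorem partial_inverse_strongly_monotone {d : ℕ} (μ β : ℝ) (hμ : 0 < μ) (hβ : 0 < β)
    (GA : Set ((Fin d → ℝ) × (Fin d → ℝ)))
    (hstrong : ∀ q₁ ∈ GA, ∀ q₂ ∈ GA,
      μ * ((q₁.1 - q₂.1) ⬝ᵥ (q₁.1 - q₂.1)) ≤ (q₁.2 - q₂.2) ⬝ᵥ (q₁.1 - q₂.1))
    (hcocoercive : ∀ q₁ ∈ GA, ∀ q₂ ∈ GA,
      β * ((q₁.2 - q₂.2) ⬝ᵥ (q₁.2 - q₂.2)) ≤ (q₁.2 - q₂.2) ⬝ᵥ (q₁.1 - q₂.1))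
    (P : Matrix (Fin d) (Fin d) ℝ) (hPsymm : P.transpose = P) (hPidem : P * P = P)
    (Q : Matrix (Fin d) (Fin d) ℝ)
    (hQ : ∃ ep : Equiv.Perm (Fin d), ∀ a b, Q a b = if b = ep a then 1 else 0)
    (H0 : Matrix (Fin d) (Fin d) ℝ) (hH0 : H0.transpose = -H0) :
    ∀ w₁ b₁ w₂ b₂ : Fin d → ℝ,
      (∃ q₁ ∈ GA, Q.transpose.mulVec w₁ = P.mulVec q₁.1 + (1 - P).mulVec q₁.2 ∧
        b₁ = Q.mulVec (P.mulVec q₁.2 + (1 - P).mulVec q₁.1) - H0.mulVec w₁) →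
      (∃ q₂ ∈ GA, Q.transpose.mulVec w₂ = P.mulVec q₂.1 + (1 - P).mulVec q₂.2 ∧
        b₂ = Q.mulVec (P.mulVec q₂.2 + (1 - P).mulVec q₂.1) - H0.mulVec w₂) →
      min μ β / 2 * ((w₁ - w₂) ⬝ᵥ (w₁ - w₂)) ≤ (b₁ - b₂) ⬝ᵥ (w₁ - w₂) := by
  rintro w₁ b₁ w₂ b₂ ⟨q₁, h₁, hw₁, hb₁⟩ ⟨q₂, h₂, hw₂, hb₂⟩
  have hs := hstrong q₁ h₁ q₂ h₂
  have hc := hcocoercive q₁ h₁ q₂ h₂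
  obtain ⟨w, hw⟩ : ∃ w, w = w₁ - w₂ := ⟨_, rfl⟩
  obtain ⟨x, hx⟩ : ∃ x, x = q₁.1 - q₂.1 := ⟨_, rfl⟩
  obtain ⟨y, hy⟩ : ∃ y, y = q₁.2 - q₂.2 := ⟨_, rfl⟩
  have hz : Q.transpose *ᵥ w = P *ᵥ x + (y - P *ᵥ y) := by
    rw [hw, hx, hy, mulVec_sub, hw₁, hw₂]
    simp only [sub_mulVec, one_mulVec, mulVec_sub]
    abel
  have hb : b₁ - b₂ = Q *ᵥ (P *ᵥ y + (x - P *ᵥ x)) - H0 *ᵥ w := by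
    rw [hw, hx, hy, hb₁, hb₂]
    simp only [sub_mulVec, one_mulVec, mulVec_sub, mulVec_add]
    abel
  rw [← hx, ← hy] at hs hc
  rw [hb, ← hw]
  have hQQ : Q * Q.transpose = 1 := by
    obtain ⟨ep, hep⟩ := hQ
    ext a b
    simp [mul_apply, hep, one_apply, eq_comm]
  have hsw : ∀ (M : Matrix (Fin d) (Fin d) ℝ) (u v : Fin d → ℝ),
      (M *ᵥ u) ⬝ᵥ v = u ⬝ᵥ (M.transpose *ᵥ v) := by
    intro M u v
    rw [dotProduct_mulVec, vecMul_transpose]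
  have hH : (H0 *ᵥ w) ⬝ᵥ w = 0 := by
    have h := hsw H0 w w
    rw [hH0, neg_mulVec, dotProduct_neg, dotProduct_comm w] at h
    linarith
  have hww : w ⬝ᵥ w = (Q.transpose *ᵥ w) ⬝ᵥ (Q.transpose *ᵥ w) := by
    rw [hsw, transpose_transpose, mulVec_mulVec, hQQ, one_mulVec]
  have hPP : ∀ u v : Fin d → ℝ, (P *ᵥ u) ⬝ᵥ (P *ᵥ v) = u ⬝ᵥ (P *ᵥ v) := by
    intro u v
    rw [hsw, hPsymm, mulVec_mulVec, hPidem]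
  have hPs : ∀ u v : Fin d → ℝ, (P *ᵥ u) ⬝ᵥ v = u ⬝ᵥ (P *ᵥ v) := by
    intro u v
    rw [hsw, hPsymm]
  rw [sub_dotProduct, hH, hsw, hww, hz]
  have e1 : (P *ᵥ x + (y - P *ᵥ y)) ⬝ᵥ (P *ᵥ x + (y - P *ᵥ y))
      = x ⬝ᵥ (P *ᵥ x) + y ⬝ᵥ y - y ⬝ᵥ (P *ᵥ y) := by
    simp only [add_dotProduct, sub_dotProduct, dotProduct_add, dotProduct_sub, hPP, hPs]
    ring
  have e2 : (P *ᵥ y + (x - P *ᵥ x)) ⬝ᵥ (P *ᵥ x + (y - P *ᵥ y)) = y ⬝ᵥ x := by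
    simp only [add_dotProduct, sub_dotProduct, dotProduct_add, dotProduct_sub, hPP, hPs]
    have h := hPs x y
    rw [dotProduct_comm] at h
    rw [dotProduct_comm x y]
    linarith
  have nn : ∀ v : Fin d → ℝ, 0 ≤ v ⬝ᵥ v := fun v =>
    Finset.sum_nonneg fun i _ => mul_self_nonneg (v i)
  have n1 : x ⬝ᵥ (P *ᵥ x) ≤ x ⬝ᵥ x := by
    have h := nn (x - P *ᵥ x)
    simp only [sub_dotProduct, dotProduct_sub, hPP, hPs] at h
    linarith
  have n2 : 0 ≤ y ⬝ᵥ (P *ᵥ y) := by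
    rw [← hPP]; exact nn _
  rw [e1, e2]
  have hm : 0 < min μ β := lt_min hμ hβ
  have m1 := mul_le_mul_of_nonneg_right (min_le_left μ β) (nn x)
  have m2 := mul_le_mul_of_nonneg_right (min_le_right μ β) (nn y)
  have m3 : min μ β * (x ⬝ᵥ (P *ᵥ x) + y ⬝ᵥ y - y ⬝ᵥ (P *ᵥ y))
      ≤ min μ β * (x ⬝ᵥ x + y ⬝ᵥ y) :=
    mul_le_mul_of_nonneg_left (by linarith) hm.le
  linarith
end

section
/- Sufficient dissipativity implies convergence of the discrete iterates (Lemma 1 / Lemma G.1). Let f: ℝ^m → ℝ ∪ {∞} be closed, strictly convex, and proper, and let (x⋆, y⋆) ∈ ℝ^m × ℝ^m satisfy y⋆ ∈ ∂f(x⋆). Let D_𝒞 and D_ℒ be diagonal matrices with strictly positive diagonal entries, let v_𝒞⋆ and i_ℒ⋆ be fixed vectors of the corresponding dimensions, and let (v_𝒞^k, i_ℒ^k, x^k, y^k), k = 1, 2, …, be a sequence with y^k ∈ ∂f(x^k) for all k. Define the energy ℰ_k = ½‖v_𝒞^k − v_𝒞⋆‖²_{D_𝒞} + ½‖i_ℒ^k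 − i_ℒ⋆‖²_{D_ℒ}. If there exists η > 0 such that ℰ_{k+1} − ℰ_k + η ⟨x^k − x⋆, y^k − y⋆⟩ ≤ 0 for all k = 1, 2, …, then x^k → x⋆ as k → ∞. -/
open Matrix

/-- Strict convexity of an extended-real-valued function on its domain. -/
def EStrictConvex {m : ℕ} (f : (Fin m → ℝ) → EReal) : Prop :=
  ∀ x z : Fin m → ℝ, x ≠ z → f x ≠ ⊤ → f z ≠ ⊤ →
    ∀ a b : ℝ, 0 < a → 0 < b → a + b = 1 →
      f (a • x + b • z) < (a : EReal) * f x + (b : EReal) * f z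

/-- **Sufficient dissipativity implies convergence of the discrete iterates
(Lemma 1 / Lemma G.1).**  If the discrete energy
`ℰ_k = ½‖v_𝒞^k − v_𝒞⋆‖²_{D_𝒞} + ½‖i_ℒ^k − i_ℒ⋆‖²_{D_ℒ}` satisfies
`ℰ_{k+1} − ℰ_k + η⟨x^k − x⋆, y^k − y⋆⟩ ≤ 0` for some `η > 0` and all `k ≥ 1`,
with `y^k ∈ ∂f(x^k)` and `f` closed, strictly convex, proper, then `x^k → x⋆`. -/
theorem sufficient_dissipativity_convergence {m nc nl : ℕ}
    (f : (Fin m → ℝ) → EReal)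
    (hclosed : LowerSemicontinuous f)
    (hstrict : EStrictConvex f)
    (hproper : ∃ z, f z ≠ ⊤) (hnb : ∀ z, f z ≠ ⊥)
    (xstar ystar : Fin m → ℝ) (hstar : ESubgradAt f ystar xstar)
    (dC : Fin nc → ℝ) (hdC : ∀ j, 0 < dC j)
    (dL : Fin nl → ℝ) (hdL : ∀ j, 0 < dL j)
    (vCstar : Fin nc → ℝ) (iLstar : Fin nl → ℝ)
    (vC : ℕ → Fin nc → ℝ) (iL : ℕ → Fin nl → ℝ)
    (x y : ℕ → Fin m → ℝ)
    (hsub : ∀ k, ESubgradAt f (y k) (x k))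
    (η : ℝ) (hη : 0 < η)
    (hdiss : ∀ k : ℕ, 1 ≤ k →
      ((1 / 2) * ∑ j, dC j * (vC (k + 1) j - vCstar j) ^ 2
        + (1 / 2) * ∑ j, dL j * (iL (k + 1) j - iLstar j) ^ 2)
      - ((1 / 2) * ∑ j, dC j * (vC k j - vCstar j) ^ 2
        + (1 / 2) * ∑ j, dL j * (iL k j - iLstar j) ^ 2)
      + η * ((x k - xstar) ⬝ᵥ (y k - ystar)) ≤ 0) :
    Filter.Tendsto x Filter.atTop (nhds xstar) := by
  classical
  -- finiteness at points with subgradients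
  have hfin : ∀ u v : Fin m → ℝ, ESubgradAt f v u → ∃ r : ℝ, f u = (r : EReal) := by
    intro u v huv
    obtain ⟨z, hz⟩ := hproper
    have htop : f u ≠ ⊤ := by
      intro h
      have := huv z
      rw [h, EReal.top_add_coe] at this
      exact hz (top_le_iff.mp this)
    exact ⟨(f u).toReal, (EReal.coe_toReal htop (hnb u)).symm⟩
  obtain ⟨F, hF⟩ := hfin _ _ hstar
  choose r hr using fun k => hfin _ _ (hsub k)
  -- the star subgradient inequality
  have hS : ∀ z : Fin m → ℝ, ((F + ystar ⬝ᵥ (z - xstar) : ℝ) : EReal) ≤ f z := by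
    intro z
    have := hstar z
    rw [hF] at this
    exact_mod_cast this
  have hA : ∀ k, r k - F - ystar ⬝ᵥ (x k - xstar) ≤ (x k - xstar) ⬝ᵥ (y k - ystar) := by
    intro k
    have h1 := hsub k xstar
    rw [hF, hr k] at h1
    have h2 : r k + y k ⬝ᵥ (xstar - x k) ≤ F := by exact_mod_cast h1
    rw [dotProduct_comm (x k - xstar), sub_dotProduct]
    have h3 : y k ⬝ᵥ (xstar - x k) = - (y k ⬝ᵥ (x k - xstar)) := by
      rw [← dotProduct_neg, neg_sub]
    linarith
  have hB : ∀ k, 0 ≤ r k - F - ystar ⬝ᵥ (x k - xstar) := by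
    intro k
    have h1 := hS (x k)
    rw [hr k] at h1
    have h2 := EReal.coe_le_coe_iff.mp h1
    linarith
  -- energy
  set E : ℕ → ℝ := fun k => (1 / 2) * ∑ j, dC j * (vC k j - vCstar j) ^ 2
        + (1 / 2) * ∑ j, dL j * (iL k j - iLstar j) ^ 2 with hE
  have hE0 : ∀ k, 0 ≤ E k := by
    intro k
    have h1 : 0 ≤ ∑ j, dC j * (vC k j - vCstar j) ^ 2 :=
      Finset.sum_nonneg fun j _ => mul_nonneg (hdC j).le (sq_nonneg _)
    have h2 : 0 ≤ ∑ j, dL j * (iL k j - iLstar j) ^ 2 :=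
      Finset.sum_nonneg fun j _ => mul_nonneg (hdL j).le (sq_nonneg _)
    simp only [hE]
    linarith
  have hd : ∀ k, 1 ≤ k → E (k + 1) - E k + η * ((x k - xstar) ⬝ᵥ (y k - ystar)) ≤ 0 := hdiss
  have hd2 : ∀ k, 1 ≤ k →
      η * (r k - F - ystar ⬝ᵥ (x k - xstar)) ≤ E k - E (k + 1) := by
    intro k hk
    have := hd k hk
    have := mul_le_mul_of_nonneg_left (hA k) hη.le
    linarith
  have hanti : Antitone (fun k => E (k + 1)) := by
    apply antitone_nat_of_succ_le
    intro k
    have h1 := hd2 (k + 1) (by omega)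
    have h2 := mul_nonneg hη.le (hB (k + 1))
    linarith
  have hlim := tendsto_atTop_ciInf hanti ⟨0, by rintro _ ⟨k, rfl⟩; exact hE0 _⟩
  have hlim' := (Filter.tendsto_add_atTop_iff_nat (f := E) 1).mp hlim
  have hdiff : Filter.Tendsto (fun k => E k - E (k + 1)) Filter.atTop (nhds 0) := by
    simpa using hlim'.sub hlim
  -- the shifted function
  set h : (Fin m → ℝ) → EReal :=
    fun z => f z + ((-(F + ystar ⬝ᵥ (z - xstar)) : ℝ) : EReal) with hh
  have hlsc : LowerSemicontinuous h := by
    apply hclosed.add'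
    · apply Continuous.lowerSemicontinuous
      apply continuous_coe_real_ereal.comp
      unfold dotProduct
      fun_prop
    · intro z
      exact EReal.continuousAt_add (Or.inr (EReal.coe_ne_bot _)) (Or.inr (EReal.coe_ne_top _))
  have hpos : ∀ w, w ≠ xstar → 0 < h w := by
    intro w hw
    by_cases hwt : f w = ⊤
    · simp only [hh, hwt, EReal.top_add_coe]
      exact EReal.zero_lt_top
    · obtain ⟨q, hq⟩ : ∃ q : ℝ, f w = q := ⟨_, (EReal.coe_toReal hwt (hnb w)).symm⟩
      have h1 := hstrict xstar w hw.symm (by rw [hF]; exact EReal.coe_ne_top _) hwt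
        (1/2) (1/2) (by norm_num) (by norm_num) (by norm_num)
      have h2 := (hS _).trans_lt h1
      rw [hF, hq] at h2
      have h3 : F + ystar ⬝ᵥ (((1/2 : ℝ) • xstar + (1/2 : ℝ) • w) - xstar)
          < (1/2) * F + (1/2) * q := by exact_mod_cast h2
      have h4 : ((1/2 : ℝ) • xstar + (1/2 : ℝ) • w) - xstar = (1/2 : ℝ) • (w - xstar) := by
        ext i; simp; ring
      rw [h4, dotProduct_smul, smul_eq_mul] at h3
      simp only [hh, hq]
      have h5 : 0 < q + -(F + ystar ⬝ᵥ (w - xstar)) := by linarith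
      exact_mod_cast h5
  rw [Metric.tendsto_atTop']
  intro ε hε
  by_contra hcon
  push Not at hcon
  have hne : (Metric.sphere xstar ε).Nonempty ∧ ∀ k, ε ≤ dist (x k) xstar →
      ∃ w ∈ Metric.sphere xstar ε,
        h w ≤ ((r k - F - ystar ⬝ᵥ (x k - xstar) : ℝ) : EReal) := by
    have key : ∀ k, ε ≤ dist (x k) xstar → ∃ w ∈ Metric.sphere xstar ε,
        h w ≤ ((r k - F - ystar ⬝ᵥ (x k - xstar) : ℝ) : EReal) := by
      intro k hk
      rcases hk.eq_or_lt with he | hlt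
      · refine ⟨x k, he.symm, ?_⟩
        simp only [hh, hr k]
        rw [← EReal.coe_add, EReal.coe_le_coe_iff]
        linarith
      · have hdp : 0 < dist (x k) xstar := hε.trans hlt
        set t := ε / dist (x k) xstar with ht
        have ht0 : 0 < t := div_pos hε hdp
        have ht1 : t < 1 := (div_lt_one hdp).mpr hlt
        have hxne : xstar ≠ x k := (dist_pos.mp hdp).symm
        have h4 : ((1 - t) • xstar + t • x k) - xstar = t • (x k - xstar) := by
          ext i; simp; ring
        refine ⟨(1 - t) • xstar + t • x k, ?_, ?_⟩
        · rw [mem_sphere_iff_norm, h4, norm_smul, Real.norm_of_nonneg ht0.le, ← dist_eq_norm, ht]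
          field_simp
        · have h1 := hstrict xstar (x k) hxne (by rw [hF]; exact EReal.coe_ne_top _)
            (by rw [hr k]; exact EReal.coe_ne_top _) (1 - t) t (by linarith) ht0 (by ring)
          rw [hF, hr k] at h1
          have h2 : f ((1 - t) • xstar + t • x k) ≤ (((1 - t) * F + t * r k : ℝ) : EReal) := by
            rw [EReal.coe_add, EReal.coe_mul, EReal.coe_mul]
            exact h1.le
          refine (add_le_add_left h2 _).trans ?_
          rw [← EReal.coe_add, EReal.coe_le_coe_iff, h4, dotProduct_smul, smul_eq_mul]
          nlinarith [hB k, mul_nonneg (sub_nonneg.mpr ht1.le) (hB k)]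
    obtain ⟨k, _, hk⟩ := hcon 0
    obtain ⟨w, hw, _⟩ := key k hk
    exact ⟨⟨w, hw⟩, key⟩
  obtain ⟨hne, key⟩ := hne
  obtain ⟨w0, hw0, hmin⟩ :=
    (hlsc.lowerSemicontinuousOn _).exists_isMinOn hne (isCompact_sphere xstar ε)
  have hc := hpos w0 (by rintro rfl; simp at hw0; linarith)
  obtain ⟨c, hc0, hc1⟩ := EReal.lt_iff_exists_real_btwn.mp hc
  have hc0' : 0 < c := by exact_mod_cast hc0
  obtain ⟨N, hN⟩ := Filter.eventually_atTop.mp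
    (hdiff.eventually (gt_mem_nhds (mul_pos hη hc0')))
  obtain ⟨k, hkN, hk⟩ := hcon (max N 1)
  obtain ⟨w, hw, hwle⟩ := key k hk
  have h1 : (c : EReal) < ((r k - F - ystar ⬝ᵥ (x k - xstar) : ℝ) : EReal) :=
    hc1.trans_le ((hmin hw).trans hwle)
  have h2 := EReal.coe_lt_coe_iff.mp h1
  have h3 := hN k ((le_max_left _ _).trans hkN.le)
  have h4 := hd2 k ((le_max_right _ _).trans hkN.le)
  have h5 := mul_lt_mul_of_pos_left h2 hη
  linarith
end

section
/- The Nesterov-acceleration circuit relations imply the Nesterov ODE. Let f: ℝ^m → ℝ be convex and differentiable, and let R, L, C > 0. Let x, v_C, i_L: [0,∞) → ℝ^m be curves such that v_C and i_L are differentiable, the map t ↦ ∇f(x(t)) is differentiable, and for all t ≥ 0: (d/dt) i_L(t) = (1/L)( v_C(t) − x(t) + R ∇f(x(t)) ), (d/dt) v_C(t) = −(1/C) ∇f(x(t)), and ∇f(x(t)) = i_L(t) + (1/R)( v_C(t) − x(t) + R ∇f(x(t)) ). Then x(t) = v_C(t) + R i_L(t) for all t, x is twice differentiable, and x'' + (R/L)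 x' + (1/C − R²/L) (d/dt)(∇f(x(t))) + (R/(LC)) ∇f(x(t)) = 0 for all t. In particular, if μ > 0 and L = 1/(8 μ √μ), C = 2√μ, R = √(L/C) = 1/(4μ), then x'' + 2√μ x' + ∇f(x) = 0. -/
open Matrix

/-- **The Nesterov-acceleration circuit relations imply the Nesterov ODE.**
If the curves satisfy the inductor relation, the capacitor relation, and
Kirchhoff's current law of the Nesterov circuit for all `t ≥ 0`, then
`x(t) = v_C(t) + R i_L(t)`, `x` is twice differentiable, and
`x'' + (R/L) x' + (1/C − R²/L)(d/dt)(∇f(x)) + (R/(LC)) ∇f(x) = 0`.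
In particular for `L = 1/(8μ√μ)`, `C = 2√μ`, `R = 1/(4μ)` one recovers
`x'' + 2√μ x' + ∇f(x) = 0`. -/
theorem nesterov_circuit_ode {m : ℕ} (μ R L C : ℝ) (hR : 0 < R) (hL : 0 < L) (hC : 0 < C)
    (f : (Fin m → ℝ) → ℝ) (g : (Fin m → ℝ) → Fin m → ℝ)
    (hconv : ConvexOn ℝ Set.univ f) (hgrad : HasGradient f g)
    (x vC iL : ℝ → Fin m → ℝ) (Gd : ℝ → Fin m → ℝ)
    (hiL : ∀ t ∈ Set.Ici (0 : ℝ), ∀ k,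
      HasDerivWithinAt (fun s => iL s k)
        ((1 / L) * (vC t k - x t k + R * g (x t) k)) (Set.Ici 0) t)
    (hvC : ∀ t ∈ Set.Ici (0 : ℝ), ∀ k,
      HasDerivWithinAt (fun s => vC s k) (-(1 / C) * g (x t) k) (Set.Ici 0) t)
    (hKCL : ∀ t ∈ Set.Ici (0 : ℝ), ∀ k,
      g (x t) k = iL t k + (1 / R) * (vC t k - x t k + R * g (x t) k))
    (hGd : ∀ t ∈ Set.Ici (0 : ℝ), ∀ k,
      HasDerivWithinAt (fun s => g (x s) k) (Gd t k) (Set.Ici 0) t) :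
    (∀ t ∈ Set.Ici (0 : ℝ), x t = vC t + R • iL t) ∧
    ∃ x' x'' : ℝ → Fin m → ℝ,
      (∀ t ∈ Set.Ici (0 : ℝ), ∀ k,
        HasDerivWithinAt (fun s => x s k) (x' t k) (Set.Ici 0) t ∧
        HasDerivWithinAt (fun s => x' s k) (x'' t k) (Set.Ici 0) t) ∧
      (∀ t ∈ Set.Ici (0 : ℝ),
        x'' t + (R / L) • x' t + (1 / C - R ^ 2 / L) • Gd t
          + (R / (L * C)) • g (x t) = 0) ∧
      ((0 < μ ∧ L = 1 / (8 * μ * Real.sqrt μ) ∧ C = 2 * Real.sqrt μ ∧ R = 1 / (4 * μ)) →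
        ∀ t ∈ Set.Ici (0 : ℝ),
          x'' t + (2 * Real.sqrt μ) • x' t + g (x t) = 0) := by
  have hx : ∀ t ∈ Set.Ici (0 : ℝ), ∀ k, x t k = vC t k + R * iL t k := by
    intro t ht k
    have h := hKCL t ht k
    field_simp at h
    linarith
  have hode : ∀ t : ℝ, ∀ k : Fin m,
      (-(1 / C) * Gd t k + R / L * (-(1 / C) * g (x t) k
          - (-(1 / C) * g (x t) k + R * ((1 / L) * (vC t k - x t k + R * g (x t) k)))
          + R * Gd t k))
        + R / L * (-(1 / C) * g (x t) k + R * ((1 / L) * (vC t k - x t k + R * g (x t) k)))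
        + (1 / C - R ^ 2 / L) * Gd t k + R / (L * C) * g (x t) k = 0 := by
    intro t k
    field_simp
    ring
  have hx1 : ∀ t ∈ Set.Ici (0 : ℝ), ∀ k, HasDerivWithinAt (fun s => x s k)
      (-(1 / C) * g (x t) k + R * ((1 / L) * (vC t k - x t k + R * g (x t) k)))
      (Set.Ici 0) t := by
    intro t ht k
    exact ((hvC t ht k).add ((hiL t ht k).const_mul R)).congr
      (fun s hs => hx s hs k) (hx t ht k)
  refine ⟨fun t ht => funext fun k => by simpa using hx t ht k,
    fun t k => -(1 / C) * g (x t) k + R * ((1 / L) * (vC t k - x t k + R * g (x t) k)),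
    fun t k => -(1 / C) * Gd t k + R / L * (-(1 / C) * g (x t) k
          - (-(1 / C) * g (x t) k + R * ((1 / L) * (vC t k - x t k + R * g (x t) k)))
          + R * Gd t k), ?_, ?_, ?_⟩
  · intro t ht k
    refine ⟨hx1 t ht k, ?_⟩
    have h := ((hGd t ht k).const_mul (-(1 / C))).add
      (((((hvC t ht k).sub (hx1 t ht k)).add ((hGd t ht k).const_mul R)).const_mul
        (1 / L)).const_mul R)
    refine h.congr_deriv ?_
    ring
  · intro t ht
    funext k
    simpa only [Pi.add_apply, Pi.smul_apply, smul_eq_mul, Pi.zero_apply] using hode t k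
  · rintro ⟨hμ, hL', hC', hR'⟩ t ht
    funext k
    have hs : 0 < Real.sqrt μ := Real.sqrt_pos.mpr hμ
    have hq : μ = Real.sqrt μ ^ 2 := (Real.sq_sqrt hμ.le).symm
    generalize Real.sqrt μ = r at *
    have h1 : R / L = 2 * r := by
      rw [hR', hL', hq]; field_simp; norm_num
    have h2 : 1 / C - R ^ 2 / L = 0 := by
      rw [hR', hL', hC', hq]; field_simp; norm_num
    have h3 : R / (L * C) = 1 := by
      rw [hR', hL', hC', hq]; field_simp; norm_num
    have h := hode t k
    rw [h2, h3, h1] at h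
    simp only [Pi.add_apply, Pi.smul_apply, smul_eq_mul, Pi.zero_apply]
    rw [h1]
    linarith
end

section
/- Consensus reduction in the decentralized ADMM circuit. Let R, L > 0 and let e, x_j, x_l, i_{jl}, i_{lj}: [0,∞) → ℝ^m be curves with i_{jl} and i_{lj} differentiable, such that for all t ≥ 0: i_{jl}(t) + i_{lj}(t) = −(1/R)( 2 e(t) − x_j(t) − x_l(t) ), (d/dt) i_{jl}(t) = (1/L)( e(t) − x_j(t) ), and (d/dt) i_{lj}(t) = (1/L)( e(t) − x_l(t) ), with initialization i_{jl}(0) + i_{lj}(0) = 0. Then i_{jl}(t) + i_{lj}(t) = 0 and e(t) = ½ ( x_j(t) + x_l(t) ) for all t ≥ 0. -/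
/-- **Consensus reduction in the decentralized ADMM circuit.**
With two resistors of resistance `R` and two inductors of inductance `L` meeting
at the edge node `e`, Kirchhoff's current law at `e` and the inductor V-I
relations, together with the initialization `i_{jl}(0) + i_{lj}(0) = 0`, imply
`i_{jl}(t) + i_{lj}(t) = 0` and `e(t) = ½(x_j(t) + x_l(t))` for all `t ≥ 0`. -/
theorem dadmm_consensus_reduction {m : ℕ} (R L : ℝ) (hR : 0 < R) (hL : 0 < L)
    (e xj xl ijl ilj : ℝ → Fin m → ℝ)
    (hKCL : ∀ t ≥ (0 : ℝ), ∀ k,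
      ijl t k + ilj t k = -(1 / R) * (2 * e t k - xj t k - xl t k))
    (hdjl : ∀ t ≥ (0 : ℝ), ∀ k,
      HasDerivWithinAt (fun s => ijl s k) ((1 / L) * (e t k - xj t k)) (Set.Ici 0) t)
    (hdlj : ∀ t ≥ (0 : ℝ), ∀ k,
      HasDerivWithinAt (fun s => ilj s k) ((1 / L) * (e t k - xl t k)) (Set.Ici 0) t)
    (hinit : ∀ k, ijl 0 k + ilj 0 k = 0) :
    ∀ t ≥ (0 : ℝ), (∀ k, ijl t k + ilj t k = 0) ∧
      (∀ k, e t k = (1 / 2) * (xj t k + xl t k)) := by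
  have hS : ∀ k, ∀ t ≥ (0 : ℝ), ijl t k + ilj t k = 0 := by
    intro k t ht
    have hd : ∀ s ≥ (0 : ℝ), HasDerivWithinAt
        (fun s => (ijl s k + ilj s k) * Real.exp (R / L * s)) 0 (Set.Ici 0) s := by
      intro s hs
      have h1 := (hdjl s hs k).add (hdlj s hs k)
      have h2 : HasDerivAt (fun s : ℝ => Real.exp (R / L * s))
          (Real.exp (R / L * s) * (R / L * 1)) s :=
        ((hasDerivAt_id s).const_mul (R / L)).exp
      have h3 := h1.mul h2.hasDerivWithinAt
      refine h3.congr_deriv ?_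
      have hk := hKCL s hs k
      simp only [Pi.add_apply]
      rw [hk]
      field_simp
      ring
    have hc := constant_of_has_deriv_right_zero (a := 0) (b := t)
      (f := fun s => (ijl s k + ilj s k) * Real.exp (R / L * s))
      (fun s hs => ((hd s hs.1).continuousWithinAt).mono Set.Icc_subset_Ici_self)
      (fun s hs => (hd s hs.1).mono (Set.Ici_subset_Ici.2 hs.1))
      t ⟨ht, le_refl t⟩
    simp only [hinit k, zero_mul] at hc
    exact (mul_eq_zero.1 hc).resolve_right (Real.exp_pos _).ne'
  intro t ht
  refine ⟨fun k => hS k t ht, fun k => ?_⟩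
  have hk := hKCL t ht k
  rw [hS k t ht] at hk
  have hR' : -(1 / R) ≠ 0 := neg_ne_zero.2 (one_div_pos.2 hR).ne'
  have := (mul_eq_zero.1 hk.symm).resolve_left hR'
  linarith
end
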